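/- Let μ ∈ [0,1), and define on T the functions ψ_μ^{(1)}(t) = u_{−1/2,1}( (t−μ)/(1−μt) ) − 1 and ψ_μ^{(−1)}(t) = u_{1/2,1}( (−t−μ)/(1+μt) ) − 1. Then there exist unitary operators U₁ and U₂ on ℓ²(ℕ) such that U₁ H(ψ_μ^{(1)}) U₁* = H(u_{−1/2,1}) and U₂ H(ψ_μ^{(−1)}) U₂* = −H(u_{1/2,1}); in particular H(ψ_μ^{(1)}) is unitarily equivalent to H(u_{−1/2,1}) and H(ψ_μ^{(−1)}) is unitarily equivalent to −H(u_{1/2,1}). -/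

import Mathlib

open Filter MeasureTheory
open scoped InnerProductSpace

noncomputable section

/-- ℓ²(ℕ) over ℂ. -/
abbrev l2 : Type := lp (fun _ : ℕ => ℂ) 2

/-- The `k`-th Fourier coefficient of a function on the unit circle, given as a
`2π`-periodic function of the angle: `a_k = (1/(2π)) ∫_0^{2π} f(θ) e^{-ikθ} dθ`. -/
def fc (f : ℝ → ℂ) (k : ℤ) : ℂ :=
  ((1 / (2 * Real.pi) : ℝ) : ℂ) *
    ∫ θ in (0:ℝ)..(2 * Real.pi), f θ * Complex.exp (-(Complex.I * k * θ))

/-- The standard orthonormal basis vector `e_j` of ℓ²(ℕ). -/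
def ee (j : ℕ) : l2 := lp.single 2 j 1

/-- Matrix entry `⟨e_j, A e_k⟩` of an operator on ℓ²(ℕ). -/
def ent (A : l2 →L[ℂ] l2) (j k : ℕ) : ℂ := ⟪ee j, A (ee k)⟫_ℂ

/-- The function `u_{β,1}` evaluated at a point `t` of the unit circle:
`u_{β,1}(e^{iθ}) = exp(iβ(θ−π))` for `0 < θ < 2π`, i.e. `exp(β · Log(−t))`. -/
def uc (β : ℂ) (t : ℂ) : ℂ := Complex.exp (β * Complex.log (-t))

/-!
For `w` in the unit disc let `k_w = (w ^ n)_n ∈ ℓ²(ℕ)`. These vectors are total, their Gram matrix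
is `⟨k_z, k_w⟩ = (1 - z̄ w)⁻¹`, and summing geometric series gives
`⟨k_z, H(a) k_w⟩ = (2πi)⁻¹ ∮ a(t) / ((t - z̄) (t - w)) dt`.
Let `φ(t) = δ (t - ν) / (1 - ν t)` with `δ = ±1` and `ν ∈ (-1, 1)`, and
`c(z) = √(1 - ν²) / (1 - ν z)`. Then `k_z ↦ c(z) k_{φ(z)}` preserves the Gram matrix, so it extends
to a unitary operator `U`. Since `φ` commutes with conjugation, the substitution `s = φ(t)` in the
integral for `⟨k_{φ(z)}, H(a) k_{φ(w)}⟩` shows that `U` conjugates `H(a ∘ φ)` into `δ H(a)`. The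
theorem is the case of `δ = 1`, `ν = μ` and of `δ = -1`, `ν = -μ`, as constants do not contribute
to `H`.
-/

section

section UnitarilyEquivalent

variable {𝕜 E F ι : Type*} [RCLike 𝕜]
  [NormedAddCommGroup E] [InnerProductSpace 𝕜 E] [NormedAddCommGroup F] [InnerProductSpace 𝕜 F]

/-- Unitary equivalence of bounded operators: `B = U A U*` for some surjective linear isometry
`U`, whose adjoint is its inverse. -/
def UnitarilyEquivalent (A : E →L[𝕜] E) (B : F →L[𝕜] F) : Prop :=
  ∃ U : E ≃ₗᵢ[𝕜] F, ∀ x, U (A (U.symm x)) = B x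

lemma inner_linearCombination_congr {v : ι → E} {w : ι → F}
    (hvw : ∀ i j, ⟪v i, v j⟫_𝕜 = ⟪w i, w j⟫_𝕜) (f g : ι →₀ 𝕜) :
    ⟪Finsupp.linearCombination 𝕜 v f, Finsupp.linearCombination 𝕜 v g⟫_𝕜 =
      ⟪Finsupp.linearCombination 𝕜 w f, Finsupp.linearCombination 𝕜 w g⟫_𝕜 := by
  simp only [Finsupp.linearCombination_apply, Finsupp.sum_inner, Finsupp.inner_sum,
    inner_smul_left, inner_smul_right, hvw]

lemma norm_linearCombination_congr {v : ι → E} {w : ι → F}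
    (hvw : ∀ i j, ⟪v i, v j⟫_𝕜 = ⟪w i, w j⟫_𝕜) (f : ι →₀ 𝕜) :
    ‖Finsupp.linearCombination 𝕜 v f‖ = ‖Finsupp.linearCombination 𝕜 w f‖ := by
  rw [@norm_eq_sqrt_re_inner 𝕜, inner_linearCombination_congr hvw, ← norm_eq_sqrt_re_inner]

lemma denseRange_linearCombination {v : ι → E}
    (hv : Dense (Submodule.span 𝕜 (Set.range v) : Set E)) :
    DenseRange (Finsupp.linearCombination 𝕜 v) := by
  rw [DenseRange, ← LinearMap.coe_range, Finsupp.range_linearCombination]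
  exact hv

lemma eq_of_forall_inner_eq {v : ι → E} (hv : Dense (Submodule.span 𝕜 (Set.range v) : Set E))
    {x y : E} (hxy : ∀ i, ⟪v i, x⟫_𝕜 = ⟪v i, y⟫_𝕜) : x = y :=
  (denseRange_linearCombination hv).eq_of_inner_right 𝕜 fun f ↦ by
    simp only [Finsupp.linearCombination_apply, Finsupp.sum_inner, inner_smul_left, hxy]

variable [CompleteSpace E] [CompleteSpace F]

theorem exists_linearIsometryEquiv_of_inner_eq {v : ι → E} {w : ι → F}
    (hv : Dense (Submodule.span 𝕜 (Set.range v) : Set E))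
    (hw : Dense (Submodule.span 𝕜 (Set.range w) : Set F))
    (hvw : ∀ i j, ⟪v i, v j⟫_𝕜 = ⟪w i, w j⟫_𝕜) :
    ∃ U : E ≃ₗᵢ[𝕜] F, ∀ i, U (v i) = w i := by
  let U : E ≃ₗᵢ[𝕜] F := (LinearEquiv.refl 𝕜 (ι →₀ 𝕜)).extendOfIsometry
    (Finsupp.linearCombination 𝕜 v) (Finsupp.linearCombination 𝕜 w)
    (denseRange_linearCombination hv) (denseRange_linearCombination hw)
    fun f ↦ (norm_linearCombination_congr hvw f).symm
  have hU (f : ι →₀ 𝕜) :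
      U (Finsupp.linearCombination 𝕜 v f) = Finsupp.linearCombination 𝕜 w f :=
    LinearEquiv.extendOfIsometry_eq _ _ _ _ _ _ f
  exact ⟨U, fun i ↦ by simpa using hU (Finsupp.single i 1)⟩

theorem UnitarilyEquivalent.of_inner_eq {A : E →L[𝕜] E} {B : F →L[𝕜] F} {v : ι → E} {w : ι → F}
    (hv : Dense (Submodule.span 𝕜 (Set.range v) : Set E))
    (hw : Dense (Submodule.span 𝕜 (Set.range w) : Set F))
    (hvw : ∀ i j, ⟪v i, v j⟫_𝕜 = ⟪w i, w j⟫_𝕜)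
    (hAB : ∀ i j, ⟪v i, A (v j)⟫_𝕜 = ⟪w i, B (w j)⟫_𝕜) :
    UnitarilyEquivalent A B := by
  obtain ⟨U, hU⟩ := exists_linearIsometryEquiv_of_inner_eq hv hw hvw
  have intertwine_apply (j : ι) : U (A (v j)) = B (U (v j)) :=
    eq_of_forall_inner_eq hw fun i ↦ by
      rw [hU, ← hAB, ← hU i, U.inner_map_map]
  have intertwine : (U : E →L[𝕜] F) ∘L A = B ∘L (U : E →L[𝕜] F) :=
    ContinuousLinearMap.ext_on hv (Set.forall_mem_range.2 intertwine_apply)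
  exact ⟨U, fun x ↦ by simpa using DFunLike.congr_fun intertwine (U.symm x)⟩

end UnitarilyEquivalent

open Complex Complex.UnitDisc ComplexConjugate Metric Set
open scoped Real Interval Topology

section SzegoKernel

lemma memℓp_two_pow (w : 𝔻) : Memℓp (fun n ↦ (w : ℂ) ^ n) 2 := by
  refine memℓp_gen ?_
  have hw : ‖(w : ℂ)‖ ^ 2 < 1 := pow_lt_one₀ (norm_nonneg _) w.norm_lt_one two_ne_zero
  simpa [← pow_mul, mul_comm] using summable_geometric_of_lt_one (by positivity) hw

/-- The Szegő kernel of the Hardy space `H² ≅ ℓ²(ℕ)`, with coefficient sequence `(w ^ n)`. It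
reproduces values at `conj w`; this normalization makes it holomorphic in `w`. -/
def szegoKernel (w : 𝔻) : l2 := ⟨fun n ↦ (w : ℂ) ^ n, memℓp_two_pow w⟩

@[simp]
lemma szegoKernel_apply (w : 𝔻) (n : ℕ) : szegoKernel w n = (w : ℂ) ^ n := rfl

lemma inner_ee_left (n : ℕ) (x : l2) : ⟪ee n, x⟫_ℂ = x n := by
  simp [ee, lp.inner_single_left]

lemma hasSum_szegoKernel (w : 𝔻) : HasSum (fun n ↦ (w : ℂ) ^ n • ee n) (szegoKernel w) := by
  simpa [ee, ← lp.single_smul] using lp.hasSum_single (by simp) (szegoKernel w)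

lemma hasSum_inner_szegoKernel_left (w : 𝔻) (x : l2) :
    HasSum (fun n ↦ conj (w : ℂ) ^ n * x n) ⟪szegoKernel w, x⟫_ℂ := by
  simpa [mul_comm] using lp.hasSum_inner (𝕜 := ℂ) (szegoKernel w) x

lemma inner_szegoKernel (z w : 𝔻) :
    ⟪szegoKernel z, szegoKernel w⟫_ℂ = (1 - conj (z : ℂ) * w)⁻¹ := by
  have hzw : ‖conj (z : ℂ) * w‖ < 1 := by
    simpa using mul_lt_one_of_nonneg_of_lt_one_left (norm_nonneg _) z.norm_lt_one w.norm_lt_one.le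
  refine (hasSum_inner_szegoKernel_left z _).unique ?_
  simpa [mul_pow] using hasSum_geometric_of_norm_lt_one hzw

lemma eq_zero_of_eventually_hasSum_pow_mul {𝕜 : Type*} [NontriviallyNormedField 𝕜] {c : ℕ → 𝕜}
    (hc : ∀ᶠ z in 𝓝 (0 : 𝕜), HasSum (fun n ↦ z ^ n * c n) 0) : c = 0 := by
  have powerSeries : HasFPowerSeriesAt (0 : 𝕜 → 𝕜) (.ofScalars 𝕜 c) 0 := by
    rw [hasFPowerSeriesAt_iff]
    simpa [FormalMultilinearSeries.coeff_ofScalars] using hc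
  ext n
  have coeff_eq := congrArg (FormalMultilinearSeries.coeff · n) powerSeries.eq_zero
  simpa [FormalMultilinearSeries.coeff_ofScalars] using
    coeff_eq.trans (FormalMultilinearSeries.coeff_eq_zero.2 rfl)

lemma eq_zero_of_inner_szegoKernel_eq_zero {x : l2} (hx : ∀ w, ⟪szegoKernel w, x⟫_ℂ = 0) :
    x = 0 := by
  refine lp.ext (eq_zero_of_eventually_hasSum_pow_mul ?_)
  filter_upwards [ball_mem_nhds (0 : ℂ) one_pos] with z hz
  have hz' : ‖conj z‖ < 1 := by simpa using hz
  simpa [hx] using hasSum_inner_szegoKernel_left (.mk (conj z) hz') x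

lemma dense_span_szegoKernel : Dense (Submodule.span ℂ (range szegoKernel) : Set l2) := by
  rw [Submodule.dense_iff_topologicalClosure_eq_top, Submodule.topologicalClosure_eq_top_iff,
    Submodule.eq_bot_iff]
  intro x hx
  refine eq_zero_of_inner_szegoKernel_eq_zero fun w ↦ hx _ (Submodule.subset_span ⟨w, rfl⟩)

end SzegoKernel

section Hankel

lemma fc_circleMap (a : ℂ → ℂ) (n : ℤ) :
    fc (fun θ ↦ a (exp (I * θ))) n = (2 * π * I : ℂ)⁻¹ * ∮ t in C(0, 1), t ^ (-n - 1) * a t := by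
  have circleMap_eq (θ : ℝ) : circleMap 0 1 θ = exp (I * θ) := by
    simp [circleMap_zero, mul_comm]
  have integrand (θ : ℝ) : a (exp (I * θ)) * exp (-(I * n * θ)) =
      I⁻¹ * (deriv (circleMap 0 1) θ • (circleMap 0 1 θ ^ (-n - 1) * a (circleMap 0 1 θ))) := by
    have circleMap_zpow : circleMap 0 1 θ * circleMap 0 1 θ ^ (-n - 1) = exp (-(I * n * θ)) := by
      rw [← zpow_one_add₀ (circleMap_ne_center one_ne_zero), circleMap_eq, ← exp_int_mul]
      congr 1
      push_cast
      ring
    rw [← circleMap_zpow, deriv_circleMap, circleMap_eq, smul_eq_mul]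
    field
  simp only [fc, circleIntegral, integrand, intervalIntegral.integral_const_mul]
  push_cast
  ring

lemma hasSum_pow_smul_circleIntegral {E : Type*} [NormedAddCommGroup E] [NormedSpace ℂ E]
    {f : ℂ → E} {R : ℝ} {w : ℂ} (hf : CircleIntegrable f 0 R) (hw : ‖w‖ < R) :
    HasSum (fun n ↦ w ^ n • ∮ t in C(0, R), t⁻¹ ^ (n + 1) • f t)
      (∮ t in C(0, R), (t - w)⁻¹ • f t) := by
  convert hasSum_two_pi_I_cauchyPowerSeries_integral hf hw using 2 with n
  · rw [← circleIntegral.integral_smul]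
    congr! 2 with t
    rw [sub_zero, div_eq_mul_inv, mul_pow, pow_succ, mul_smul, mul_smul]
  · simp

/-- `A` is the Hankel operator `H(a)`; the symbol `a` is a function on the unit circle. -/
def IsHankel (A : l2 →L[ℂ] l2) (a : ℂ → ℂ) : Prop :=
  ∀ j k : ℕ, ent A j k = fc (fun θ ↦ a (exp (I * θ))) (j + k + 1)

variable {A : l2 →L[ℂ] l2} {a : ℂ → ℂ}

lemma isHankel_iff : IsHankel A a ↔ ∀ j k : ℕ,
    ent A j k = (2 * π * I : ℂ)⁻¹ * ∮ t in C(0, 1), t⁻¹ ^ (j + k + 2) * a t := by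
  have zpow_eq (j k : ℕ) (t : ℂ) : t ^ (-(j + k + 1 : ℤ) - 1) = t⁻¹ ^ (j + k + 2) := by
    rw [inv_pow, ← zpow_natCast, ← zpow_neg]
    grind
  simp only [IsHankel, fc_circleMap, zpow_eq]

lemma sub_ne_zero_of_norm_lt {E : Type*} [NormedAddGroup E] {x y : E} (h : ‖y‖ < ‖x‖) :
    x - y ≠ 0 :=
  sub_ne_zero.2 (ne_of_apply_ne norm h.ne')

lemma continuousOn_sub_inv_sphere {w : ℂ} (hw : ‖w‖ < 1) :
    ContinuousOn (fun t ↦ (t - w)⁻¹) (sphere 0 1) := by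
  refine ContinuousOn.inv₀ (by fun_prop) fun t ht ↦ sub_ne_zero_of_norm_lt ?_
  rwa [mem_sphere_zero_iff_norm.1 ht]

lemma continuousOn_inv_pow_sphere (n : ℕ) :
    ContinuousOn (fun t : ℂ ↦ t⁻¹ ^ n) (sphere 0 1) := by
  simpa using (continuousOn_sub_inv_sphere (w := 0) (by simp)).fun_pow n

lemma IsHankel.apply_szegoKernel (hA : IsHankel A a) (ha : CircleIntegrable a 0 1) (w : 𝔻)
    (j : ℕ) :
    A (szegoKernel w) j =
      (2 * π * I : ℂ)⁻¹ * ∮ t in C(0, 1), t⁻¹ ^ (j + 1) * ((t - w)⁻¹ * a t) := by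
  have expansion : HasSum (fun k ↦ (w : ℂ) ^ k * ent A j k) (A (szegoKernel w) j) := by
    simpa [inner_smul_right, ← inner_ee_left, ent] using
      ((hasSum_szegoKernel w).mapL A).mapL (innerSL ℂ (ee j))
  have integrable : CircleIntegrable (fun t ↦ t⁻¹ ^ (j + 1) * a t) 0 1 :=
    ha.fun_continuousOn_mul (by simpa using continuousOn_inv_pow_sphere (j + 1))
  refine expansion.unique ?_
  convert! (hasSum_pow_smul_circleIntegral integrable w.norm_lt_one).mul_left
    (2 * π * I : ℂ)⁻¹ using 2 with k
  · have pow_mul_pow (t : ℂ) : t⁻¹ ^ (j + k + 2) = t⁻¹ ^ (k + 1) * t⁻¹ ^ (j + 1) := by ring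
    simp only [isHankel_iff.1 hA, smul_eq_mul, pow_mul_pow, mul_assoc, mul_left_comm]
  · simp only [smul_eq_mul, mul_left_comm]

lemma IsHankel.inner_szegoKernel (hA : IsHankel A a) (ha : CircleIntegrable a 0 1) (z w : 𝔻) :
    ⟪szegoKernel z, A (szegoKernel w)⟫_ℂ =
      (2 * π * I : ℂ)⁻¹ * ∮ t in C(0, 1), (t - conj (z : ℂ))⁻¹ * ((t - w)⁻¹ * a t) := by
  have integrable : CircleIntegrable (fun t ↦ (t - w)⁻¹ * a t) 0 1 :=
    ha.fun_continuousOn_mul (by simpa using continuousOn_sub_inv_sphere w.norm_lt_one)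
  have hz : ‖conj (z : ℂ)‖ < 1 := by simpa using z.norm_lt_one
  refine (hasSum_inner_szegoKernel_left z _).unique ?_
  simpa [hA.apply_szegoKernel ha, mul_left_comm] using
    (hasSum_pow_smul_circleIntegral integrable hz).mul_left (2 * π * I : ℂ)⁻¹

lemma IsHankel.of_sub_const (ha : CircleIntegrable a 0 1) {c : ℂ}
    (hA : IsHankel A fun t ↦ a t - c) : IsHankel A a := by
  refine isHankel_iff.2 fun j k ↦ ?_
  have zpow_cont : ContinuousOn (fun t : ℂ ↦ t⁻¹ ^ (j + k + 2)) (sphere 0 |1|) := by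
    simpa using continuousOn_inv_pow_sphere (j + k + 2)
  have integral_const : ∮ t in C(0, 1), t⁻¹ ^ (j + k + 2) * c = 0 := by
    have zpow_eq (t : ℂ) : t⁻¹ ^ (j + k + 2) = (t - 0) ^ (-(j + k + 2 : ℤ)) := by
      rw [sub_zero, inv_pow, zpow_neg]
      rfl
    simp only [mul_comm _ c, circleIntegral.integral_const_mul, zpow_eq]
    rw [circleIntegral.integral_sub_zpow_of_ne (by lia), mul_zero]
  rw [isHankel_iff.1 hA]
  simp only [mul_sub]
  rw [circleIntegral.integral_sub (ha.fun_continuousOn_mul zpow_cont)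
    ((circleIntegrable_const c 0 1).fun_continuousOn_mul zpow_cont), integral_const, sub_zero]

end Hankel

section Moebius

/-- The disc automorphism `t ↦ δ (t - ν) / (1 - conj ν * t)`, for `‖δ‖ = 1` and `‖ν‖ < 1`. -/
def moebius (δ ν t : ℂ) : ℂ := δ * ((t - ν) / (1 - conj ν * t))

variable {δ ν t z w : ℂ}

lemma one_sub_conj_mul_ne_zero (hν : ‖ν‖ < 1) (ht : ‖t‖ ≤ 1) : 1 - conj ν * t ≠ 0 := by
  intro h
  have norm_mul : ‖ν‖ * ‖t‖ = 1 := by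
    rw [← RCLike.norm_conj ν, ← norm_mul, ← sub_eq_zero.1 h, norm_one]
  nlinarith [norm_nonneg ν]

lemma one_sub_mul_conj_ne_zero (hν : ‖ν‖ < 1) (ht : ‖t‖ ≤ 1) : 1 - ν * conj t ≠ 0 := by
  simpa using (map_ne_zero conj).2 (one_sub_conj_mul_ne_zero hν ht)

lemma one_sub_norm_sq_pos (hν : ‖ν‖ < 1) : 0 < 1 - ‖ν‖ ^ 2 := by
  nlinarith [norm_nonneg ν]

lemma moebius_sub_moebius (ht : 1 - conj ν * t ≠ 0) (hz : 1 - conj ν * z ≠ 0) :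
    moebius δ ν t - moebius δ ν z =
      δ * (1 - ν * conj ν) * (t - z) / ((1 - conj ν * t) * (1 - conj ν * z)) := by
  rw [moebius, moebius, ← mul_sub, div_sub_div _ _ ht hz]
  ring

lemma one_sub_conj_moebius_mul_moebius (hδ : ‖δ‖ = 1) (hz : 1 - conj ν * z ≠ 0)
    (hw : 1 - conj ν * w ≠ 0) :
    1 - conj (moebius δ ν z) * moebius δ ν w =
      (1 - ν * conj ν) * (1 - conj z * w) / ((1 - ν * conj z) * (1 - conj ν * w)) := by
  have hz' : 1 - ν * conj z ≠ 0 := by simpa using (map_ne_zero (starRingEnd ℂ)).2 hz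
  have hδ' : conj δ * δ = 1 := by simp [conj_mul', hδ]
  simp only [moebius, map_mul, map_div₀, map_sub, map_one, Complex.conj_conj]
  rw [mul_mul_mul_comm, hδ', one_mul, div_mul_div_comm, one_sub_div (mul_ne_zero hz' hw)]
  ring

lemma norm_moebius_lt_one (hδ : ‖δ‖ = 1) (hν : ‖ν‖ < 1) (hz : ‖z‖ < 1) : ‖moebius δ ν z‖ < 1 := by
  have hνz := one_sub_conj_mul_ne_zero hν hz.le
  have schwarzPick : 1 - ‖moebius δ ν z‖ ^ 2 =
      (1 - ‖ν‖ ^ 2) * (1 - ‖z‖ ^ 2) / ‖1 - conj ν * z‖ ^ 2 := by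
    rw [← ofReal_inj]
    push_cast
    rw [← conj_mul', ← conj_mul', ← conj_mul', ← conj_mul',
      one_sub_conj_moebius_mul_moebius hδ hνz hνz]
    simp [mul_comm ν]
  have : 0 < (1 - ‖ν‖ ^ 2) * (1 - ‖z‖ ^ 2) / ‖1 - conj ν * z‖ ^ 2 := by
    have := norm_pos_iff.2 hνz
    have := one_sub_norm_sq_pos hν
    have := one_sub_norm_sq_pos hz
    positivity
  nlinarith [norm_nonneg (moebius δ ν z)]

lemma moebius_moebius_conj_neg (hδ : ‖δ‖ = 1) (hν : ‖ν‖ < 1) (hz : ‖z‖ < 1) :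
    moebius δ ν (moebius (conj δ) (-δ * ν) z) = z := by
  have hδν : ‖-δ * ν‖ < 1 := by simpa [hδ] using hν
  have hz' := one_sub_conj_mul_ne_zero hδν hz.le
  have hν' := one_sub_conj_mul_ne_zero hν hν.le
  have hδ' : conj δ * δ = 1 := by simp [conj_mul', hδ]
  simp only [map_mul, map_neg, moebius] at hz' ⊢
  field_simp
  grind

lemma hasDerivAt_moebius (ht : 1 - conj ν * t ≠ 0) :
    HasDerivAt (moebius δ ν) (δ * (1 - ν * conj ν) / (1 - conj ν * t) ^ 2) t := by
  have numerator : HasDerivAt (fun t ↦ t - ν) 1 t := (hasDerivAt_id t).sub_const ν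
  have denominator : HasDerivAt (fun t ↦ 1 - conj ν * t) (-conj ν) t := by
    simpa using ((hasDerivAt_id t).const_mul (conj ν)).const_sub 1
  convert! (numerator.div denominator ht).const_mul δ using 1
  ring

end Moebius

section CircleChangeOfVariables

/-- The lift of `moebius δ ν` to angles: an increasing function `α` on `ℝ` with
`exp (i α(θ)) = moebius δ ν (exp (i θ))`. Its derivative is the Poisson kernel at `ν`. -/
def moebiusAngle (δ ν : ℂ) (θ : ℝ) : ℝ := arg δ + θ - 2 * arg (1 - conj ν * circleMap 0 1 θ)

variable {δ ν : ℂ}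

lemma conj_circleMap_one (θ : ℝ) : conj (circleMap 0 1 θ) = (circleMap 0 1 θ)⁻¹ :=
  (inv_eq_conj (by simp)).symm

lemma exp_neg_two_mul_arg_mul_I {u : ℂ} (hu : u ≠ 0) : exp (-(2 * arg u * I)) = conj u / u := by
  have hu' : (‖u‖ : ℂ) ≠ 0 := by simpa using hu
  have polar : u = ‖u‖ * exp (arg u * I) := (norm_mul_exp_arg_mul_I u).symm
  have polar_conj : conj u = ‖u‖ * exp (-(arg u * I)) := by
    conv_lhs => rw [polar]
    rw [map_mul, conj_ofReal, ← exp_conj, map_mul, conj_ofReal, conj_I, mul_neg]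
  calc exp (-(2 * arg u * I)) = exp (-(arg u * I)) / exp (arg u * I) := by
        rw [← exp_sub]
        ring_nf
    _ = ‖u‖ * exp (-(arg u * I)) / (‖u‖ * exp (arg u * I)) := (mul_div_mul_left _ _ hu').symm
    _ = conj u / u := by rw [← polar_conj, ← polar]

lemma circleMap_moebiusAngle (hδ : ‖δ‖ = 1) (hν : ‖ν‖ < 1) (θ : ℝ) :
    circleMap 0 1 (moebiusAngle δ ν θ) = moebius δ ν (circleMap 0 1 θ) := by
  have ht : 1 - conj ν * circleMap 0 1 θ ≠ 0 := one_sub_conj_mul_ne_zero hν (by simp)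
  have arg_δ : exp (arg δ * I) = δ := by simpa [hδ] using norm_mul_exp_arg_mul_I δ
  have expand : circleMap 0 1 (moebiusAngle δ ν θ) = exp (arg δ * I) * circleMap 0 1 θ *
      exp (-(2 * arg (1 - conj ν * circleMap 0 1 θ) * I)) := by
    simp only [circleMap_zero, moebiusAngle, ofReal_one, one_mul, ← exp_add]
    push_cast
    ring_nf
  have circleMap_ne : circleMap 0 1 θ ≠ 0 := circleMap_ne_center one_ne_zero
  rw [expand, arg_δ, exp_neg_two_mul_arg_mul_I ht, moebius]
  simp only [map_sub, map_one, map_mul, Complex.conj_conj, conj_circleMap_one]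
  field

lemma circleMap_sub_ne_zero (hν : ‖ν‖ < 1) (θ : ℝ) : circleMap 0 1 θ - ν ≠ 0 :=
  sub_ne_zero_of_norm_lt (by simpa using hν)

lemma poissonKernel_circleMap_pos (hν : ‖ν‖ < 1) (θ : ℝ) :
    0 < poissonKernel 0 ν (circleMap 0 1 θ) := by
  have norm_pos : 0 < ‖circleMap 0 1 θ - ν‖ := norm_pos_iff.2 (circleMap_sub_ne_zero hν θ)
  have := one_sub_norm_sq_pos hν
  simp only [poissonKernel_def, sub_zero, norm_circleMap_zero, abs_one, one_pow]
  positivity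

lemma ofReal_poissonKernel_circleMap (ν : ℂ) (θ : ℝ) :
    (poissonKernel 0 ν (circleMap 0 1 θ) : ℂ) = (1 - ν * conj ν) * circleMap 0 1 θ /
      ((circleMap 0 1 θ - ν) * (1 - conj ν * circleMap 0 1 θ)) := by
  have circleMap_ne : circleMap 0 1 θ ≠ 0 := circleMap_ne_center one_ne_zero
  have denominator : (‖circleMap 0 1 θ - ν‖ : ℂ) ^ 2 =
      (circleMap 0 1 θ - ν) * (1 - conj ν * circleMap 0 1 θ) / circleMap 0 1 θ := by
    rw [← mul_conj', map_sub, conj_circleMap_one]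
    field
  simp only [poissonKernel_def, sub_zero, norm_circleMap_zero, abs_one, one_pow]
  push_cast
  rw [denominator, ← mul_conj', div_div_eq_mul_div]

lemma poissonKernel_circleMap_eq_re (hν : ‖ν‖ < 1) (θ : ℝ) :
    poissonKernel 0 ν (circleMap 0 1 θ) =
      1 + 2 * (conj ν * circleMap 0 1 θ / (1 - conj ν * circleMap 0 1 θ)).re := by
  have ht : circleMap 0 1 θ ≠ 0 := circleMap_ne_center one_ne_zero
  have hut : 1 - conj ν * circleMap 0 1 θ ≠ 0 := one_sub_conj_mul_ne_zero hν (by simp)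
  have hνt := circleMap_sub_ne_zero hν θ
  have conj_eq : conj (conj ν * circleMap 0 1 θ / (1 - conj ν * circleMap 0 1 θ)) =
      ν / (circleMap 0 1 θ - ν) := by
    simp only [map_div₀, map_sub, map_mul, map_one, Complex.conj_conj, conj_circleMap_one]
    field
  rw [← ofReal_inj, ofReal_poissonKernel_circleMap, ofReal_add, ← add_conj, conj_eq]
  push_cast
  field

lemma hasDerivAt_moebiusAngle (δ : ℂ) (hν : ‖ν‖ < 1) (θ : ℝ) :
    HasDerivAt (moebiusAngle δ ν) (poissonKernel 0 ν (circleMap 0 1 θ)) θ := by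
  set t := circleMap 0 1 θ with ht
  have mem_slitPlane : 1 - conj ν * t ∈ slitPlane := by
    simpa [sub_eq_add_neg] using mem_slitPlane_of_norm_lt_one (z := -(conj ν * t)) (by simpa [ht])
  have log_deriv : HasDerivAt (fun θ : ℝ ↦ log (1 - conj ν * circleMap 0 1 θ))
      (-(conj ν * (t * I)) / (1 - conj ν * t)) θ :=
    (((hasDerivAt_circleMap 0 1 θ).const_mul (conj ν)).const_sub 1).clog_real mem_slitPlane
  have arg_deriv : HasDerivAt (fun θ : ℝ ↦ arg (1 - conj ν * circleMap 0 1 θ))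
      (-(conj ν * (t * I)) / (1 - conj ν * t)).im θ := by
    simpa [Function.comp_def, log_im] using imCLM.hasFDerivAt.comp_hasDerivAt θ log_deriv
  have im_eq : (-(conj ν * (t * I)) / (1 - conj ν * t)).im =
      -(conj ν * t / (1 - conj ν * t)).re := by
    rw [← mul_I_im, ← neg_im]
    ring_nf
  rw [poissonKernel_circleMap_eq_re hν, ← sub_neg_eq_add, ← mul_neg, ← im_eq]
  exact ((hasDerivAt_id θ).const_add (arg δ)).sub (arg_deriv.const_mul 2)

lemma continuous_poissonKernel_circleMap (hν : ‖ν‖ < 1) :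
    Continuous fun θ ↦ poissonKernel 0 ν (circleMap 0 1 θ) := by
  simp only [poissonKernel_def, sub_zero]
  exact Continuous.div (by fun_prop) (by fun_prop) fun θ ↦ by
    simpa using circleMap_sub_ne_zero hν θ

lemma moebiusAngle_two_pi (δ ν : ℂ) :
    moebiusAngle δ ν (2 * π) = moebiusAngle δ ν 0 + 2 * π := by
  rw [moebiusAngle, moebiusAngle, (periodic_circleMap 0 1).eq]
  ring

lemma deriv_moebius_mul_circleMap (hν : ‖ν‖ < 1) (θ : ℝ) :
    deriv (moebius δ ν) (circleMap 0 1 θ) * circleMap 0 1 θ =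
      poissonKernel 0 ν (circleMap 0 1 θ) * moebius δ ν (circleMap 0 1 θ) := by
  have hut : 1 - conj ν * circleMap 0 1 θ ≠ 0 := one_sub_conj_mul_ne_zero hν (by simp)
  have hνt := circleMap_sub_ne_zero hν θ
  rw [(hasDerivAt_moebius hut).deriv, ofReal_poissonKernel_circleMap, moebius]
  field

theorem circleIntegral_deriv_moebius_smul {E : Type*} [NormedAddCommGroup E] [NormedSpace ℂ E]
    (hδ : ‖δ‖ = 1) (hν : ‖ν‖ < 1) (F : ℂ → E) :
    ∮ t in C(0, 1), deriv (moebius δ ν) t • F (moebius δ ν t) = ∮ t in C(0, 1), F t := by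
  let G (θ : ℝ) : E := deriv (circleMap 0 1) θ • F (circleMap 0 1 θ)
  have periodic_G : Function.Periodic G (2 * π) := fun θ ↦ by
    simp only [G, deriv_circleMap, periodic_circleMap 0 1 θ]
  have integrand (θ : ℝ) : deriv (circleMap 0 1) θ • deriv (moebius δ ν) (circleMap 0 1 θ) •
      F (moebius δ ν (circleMap 0 1 θ)) =
        poissonKernel 0 ν (circleMap 0 1 θ) • G (moebiusAngle δ ν θ) := by
    simp only [G, deriv_circleMap, circleMap_moebiusAngle hδ hν, smul_smul, ← coe_smul]
    congr 1
    linear_combination I * deriv_moebius_mul_circleMap (δ := δ) hν θ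
  calc ∮ t in C(0, 1), deriv (moebius δ ν) t • F (moebius δ ν t)
    _ = ∫ θ in 0..2 * π, poissonKernel 0 ν (circleMap 0 1 θ) • (G ∘ moebiusAngle δ ν) θ := by
      simp only [circleIntegral, integrand, Function.comp_apply]
    _ = ∫ s in moebiusAngle δ ν 0..moebiusAngle δ ν (2 * π), G s :=
      intervalIntegral.integral_deriv_smul_comp_of_deriv_nonneg
        (fun θ _ ↦ (hasDerivAt_moebiusAngle δ hν θ).continuousAt.continuousWithinAt)
        (fun θ _ ↦ hasDerivAt_moebiusAngle δ hν θ)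
        fun θ _ ↦ (poissonKernel_circleMap_pos hν θ).le
    _ = ∮ t in C(0, 1), F t := by
      rw [moebiusAngle_two_pi, periodic_G.intervalIntegral_add_eq _ 0, zero_add, circleIntegral]

theorem circleIntegrable_comp_moebius {E : Type*} [NormedAddCommGroup E] [NormedSpace ℝ E]
    {F : ℂ → E} (hδ : ‖δ‖ = 1) (hν : ‖ν‖ < 1) (hF : CircleIntegrable F 0 1) :
    CircleIntegrable (fun t ↦ F (moebius δ ν t)) 0 1 := by
  have periodic_F : Function.Periodic (fun θ ↦ F (circleMap 0 1 θ)) (2 * π) := fun θ ↦ by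
    simp only [periodic_circleMap 0 1 θ]
  have weighted : IntervalIntegrable (fun θ ↦ poissonKernel 0 ν (circleMap 0 1 θ) •
      ((fun s ↦ F (circleMap 0 1 s)) ∘ moebiusAngle δ ν) θ) volume 0 (2 * π) := by
    refine (intervalIntegral.integrable_deriv_smul_comp_iff_of_deriv_nonneg
      (fun θ _ ↦ (hasDerivAt_moebiusAngle δ hν θ).continuousAt.continuousWithinAt)
      (fun θ _ ↦ hasDerivAt_moebiusAngle δ hν θ)
      fun θ _ ↦ (poissonKernel_circleMap_pos hν θ).le).2 ?_
    exact periodic_F.intervalIntegrable₀ Real.two_pi_pos.ne' hF _ _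
  have inv_continuous : Continuous fun θ ↦ (poissonKernel 0 ν (circleMap 0 1 θ))⁻¹ :=
    (continuous_poissonKernel_circleMap hν).inv₀ fun θ ↦ (poissonKernel_circleMap_pos hν θ).ne'
  refine (weighted.continuousOn_smul inv_continuous.continuousOn).congr fun θ _ ↦ ?_
  simp [smul_smul, circleMap_moebiusAngle hδ hν, (poissonKernel_circleMap_pos hν θ).ne']

end CircleChangeOfVariables

section MoebiusSubstitution

/-- The action of the disc automorphism `moebius δ ν` on the points of the unit disc. -/
def moebiusDisc {δ ν : ℂ} (hδ : ‖δ‖ = 1) (hν : ‖ν‖ < 1) (z : 𝔻) : 𝔻 :=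
  .mk (moebius δ ν z) (norm_moebius_lt_one hδ hν z.norm_lt_one)

/-- The factor `c z` for which `szegoKernel z ↦ c z • szegoKernel (moebius δ ν z)` preserves inner
products: `c z ^ 2` is the derivative of `moebius δ ν` at `z`, up to the unimodular factor `δ`. -/
def szegoFactor (ν : ℂ) (z : 𝔻) : ℂ := √(1 - ‖ν‖ ^ 2) / (1 - conj ν * z)

variable {δ ν : ℂ}

lemma szegoFactor_ne_zero (hν : ‖ν‖ < 1) (z : 𝔻) : szegoFactor ν z ≠ 0 :=
  div_ne_zero (ofReal_ne_zero.2 (Real.sqrt_pos.2 (one_sub_norm_sq_pos hν)).ne')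
    (one_sub_conj_mul_ne_zero hν z.norm_lt_one.le)

lemma conj_szegoFactor_mul_szegoFactor (hν : ‖ν‖ < 1) (z w : 𝔻) :
    conj (szegoFactor ν z) * szegoFactor ν w =
      (1 - ν * conj ν) / ((1 - ν * conj (z : ℂ)) * (1 - conj ν * w)) := by
  have sqrt_mul_sqrt : (√(1 - ‖ν‖ ^ 2) * √(1 - ‖ν‖ ^ 2) : ℂ) = 1 - ν * conj ν := by
    rw [← ofReal_mul, Real.mul_self_sqrt (one_sub_norm_sq_pos hν).le, mul_conj']
    push_cast
    rfl
  simp only [szegoFactor, map_div₀, map_sub, map_one, map_mul, conj_ofReal, Complex.conj_conj]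
  rw [div_mul_div_comm, sqrt_mul_sqrt]

lemma inner_szegoFactor_smul_szegoKernel (hδ : ‖δ‖ = 1) (hν : ‖ν‖ < 1) (z w : 𝔻) :
    ⟪szegoFactor ν z • szegoKernel (moebiusDisc hδ hν z),
      szegoFactor ν w • szegoKernel (moebiusDisc hδ hν w)⟫_ℂ =
        ⟪szegoKernel z, szegoKernel w⟫_ℂ := by
  have hνν := one_sub_mul_conj_ne_zero hν hν.le
  have hz := one_sub_conj_mul_ne_zero hν z.norm_lt_one.le
  have hw := one_sub_conj_mul_ne_zero hν w.norm_lt_one.le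
  have hz' := one_sub_mul_conj_ne_zero hν z.norm_lt_one.le
  rw [inner_smul_left, inner_smul_right, ← mul_assoc, conj_szegoFactor_mul_szegoFactor hν,
    inner_szegoKernel, inner_szegoKernel]
  simp only [moebiusDisc, UnitDisc.coe_mk]
  rw [one_sub_conj_moebius_mul_moebius hδ hz hw]
  field

lemma moebiusDisc_surjective (hδ : ‖δ‖ = 1) (hν : ‖ν‖ < 1) :
    Function.Surjective (moebiusDisc hδ hν) := fun z ↦
  ⟨moebiusDisc (δ := conj δ) (ν := -δ * ν) (by simpa using hδ) (by simpa [hδ] using hν) z,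
    UnitDisc.coe_injective (moebius_moebius_conj_neg hδ hν z.norm_lt_one)⟩

lemma dense_span_szegoFactor_smul_szegoKernel (hδ : ‖δ‖ = 1) (hν : ‖ν‖ < 1) :
    Dense (Submodule.span ℂ
      (range fun z ↦ szegoFactor ν z • szegoKernel (moebiusDisc hδ hν z)) : Set l2) := by
  refine dense_span_szegoKernel.mono (SetLike.coe_subset_coe.2 (Submodule.span_le.2 ?_))
  rw [← (moebiusDisc_surjective hδ hν).range_comp szegoKernel]
  rintro _ ⟨z, rfl⟩
  exact (Submodule.smul_mem_iff _ (szegoFactor_ne_zero hν z)).1 (Submodule.subset_span ⟨z, rfl⟩)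

lemma conj_moebius_ofReal (δ ν : ℝ) (z : ℂ) : conj (moebius δ ν z) = moebius δ ν (conj z) := by
  simp [moebius]

lemma deriv_moebius_mul_inv_sub_mul_inv_sub (hδ : δ ≠ 0) (hν : ‖ν‖ < 1) {t z w : ℂ}
    (ht : ‖t‖ = 1) (hz : ‖z‖ < 1) (hw : ‖w‖ < 1) :
    deriv (moebius δ ν) t * ((moebius δ ν t - moebius δ ν z)⁻¹ *
        (moebius δ ν t - moebius δ ν w)⁻¹) =
      (1 - conj ν * z) * (1 - conj ν * w) / (δ * (1 - ν * conj ν)) * ((t - z)⁻¹ * (t - w)⁻¹) := by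
  have hνν := one_sub_mul_conj_ne_zero hν hν.le
  have hνt := one_sub_conj_mul_ne_zero hν ht.le
  have hνz := one_sub_conj_mul_ne_zero hν hz.le
  have hνw := one_sub_conj_mul_ne_zero hν hw.le
  have htz : t - z ≠ 0 := sub_ne_zero_of_norm_lt (hz.trans_eq ht.symm)
  have htw : t - w ≠ 0 := sub_ne_zero_of_norm_lt (hw.trans_eq ht.symm)
  rw [(hasDerivAt_moebius hνt).deriv, moebius_sub_moebius hνt hνz, moebius_sub_moebius hνt hνw]
  field

lemma circleIntegral_inv_sub_moebius_mul (hδ : ‖δ‖ = 1) (hν : ‖ν‖ < 1) {z w : ℂ} (hz : ‖z‖ < 1)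
    (hw : ‖w‖ < 1) (a : ℂ → ℂ) :
    ∮ t in C(0, 1), (t - moebius δ ν z)⁻¹ * ((t - moebius δ ν w)⁻¹ * a t) =
      (1 - conj ν * z) * (1 - conj ν * w) / (δ * (1 - ν * conj ν)) *
        ∮ t in C(0, 1), (t - z)⁻¹ * ((t - w)⁻¹ * a (moebius δ ν t)) := by
  have hδ' : δ ≠ 0 := norm_ne_zero_iff.1 (hδ ▸ one_ne_zero)
  rw [← circleIntegral_deriv_moebius_smul hδ hν, ← circleIntegral.integral_const_mul]
  refine circleIntegral.integral_congr zero_le_one fun t ht ↦ ?_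
  rw [mem_sphere_zero_iff_norm] at ht
  linear_combination
    a (moebius δ ν t) * deriv_moebius_mul_inv_sub_mul_inv_sub hδ' hν ht hz hw

lemma IsHankel.inner_szegoFactor_smul {δ ν : ℝ} {A B : l2 →L[ℂ] l2} {a : ℂ → ℂ}
    (hδ : ‖(δ : ℂ)‖ = 1) (hν : ‖(ν : ℂ)‖ < 1) (ha : CircleIntegrable a 0 1)
    (hA : IsHankel A fun t ↦ a (moebius δ ν t)) (hB : IsHankel B a) (z w : 𝔻) :
    ⟪szegoFactor ν z • szegoKernel (moebiusDisc hδ hν z),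
      ((δ : ℂ) • B) (szegoFactor ν w • szegoKernel (moebiusDisc hδ hν w))⟫_ℂ =
        ⟪szegoKernel z, A (szegoKernel w)⟫_ℂ := by
  have hz : ‖conj (z : ℂ)‖ < 1 := by simpa using z.norm_lt_one
  have hδ' : (δ : ℂ) ≠ 0 := norm_ne_zero_iff.1 (hδ ▸ one_ne_zero)
  have hνν := one_sub_mul_conj_ne_zero hν hν.le
  have hνz := one_sub_mul_conj_ne_zero hν z.norm_lt_one.le
  have hνw := one_sub_conj_mul_ne_zero hν w.norm_lt_one.le
  rw [_root_.map_smul, smul_apply, inner_smul_left, inner_smul_right,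
    ← mul_assoc, conj_szegoFactor_mul_szegoFactor hν, inner_smul_right, hB.inner_szegoKernel ha,
    hA.inner_szegoKernel (circleIntegrable_comp_moebius hδ hν ha)]
  simp only [moebiusDisc, UnitDisc.coe_mk, conj_moebius_ofReal]
  rw [circleIntegral_inv_sub_moebius_mul hδ hν hz w.norm_lt_one]
  simp only [conj_ofReal, ← sq] at hνν hνw ⊢
  field

theorem IsHankel.unitarilyEquivalent_smul {δ ν : ℝ} {A B : l2 →L[ℂ] l2} {a : ℂ → ℂ} {c : ℂ}
    (hδ : |δ| = 1) (hν : |ν| < 1) (ha : CircleIntegrable a 0 1)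
    (hA : IsHankel A fun t ↦ a (moebius δ ν t) - c) (hB : IsHankel B a) :
    UnitarilyEquivalent A ((δ : ℂ) • B) := by
  have hδ' : ‖(δ : ℂ)‖ = 1 := by simpa using hδ
  have hν' : ‖(ν : ℂ)‖ < 1 := by simpa using hν
  have hA' : IsHankel A fun t ↦ a (moebius δ ν t) :=
    hA.of_sub_const (circleIntegrable_comp_moebius hδ' hν' ha)
  exact .of_inner_eq dense_span_szegoKernel (dense_span_szegoFactor_smul_szegoKernel hδ' hν')
    (fun z w ↦ (inner_szegoFactor_smul_szegoKernel hδ' hν' z w).symm)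
    fun z w ↦ (hA'.inner_szegoFactor_smul hδ' hν' ha hB z w).symm

end MoebiusSubstitution

section SymbolU

lemma norm_uc_le (β : ℂ) {t : ℂ} (ht : ‖t‖ = 1) : ‖uc β t‖ ≤ Real.exp (|β.im| * π) := by
  rw [uc, norm_exp, Real.exp_le_exp]
  calc (β * log (-t)).re = -(β.im * arg (-t)) := by simp [log_re, log_im, ht]
    _ ≤ |β.im| * |arg (-t)| := (neg_le_abs _).trans_eq (abs_mul _ _)
    _ ≤ |β.im| * π := mul_le_mul_of_nonneg_left (abs_arg_le_pi _) (abs_nonneg _)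

lemma circleIntegrable_uc (β : ℂ) : CircleIntegrable (uc β) 0 1 := by
  have measurable_uc : Measurable fun θ ↦ uc β (circleMap 0 1 θ) := by
    unfold uc
    fun_prop
  rw [CircleIntegrable, intervalIntegrable_iff_integrableOn_Ioc_of_le Real.two_pi_pos.le]
  exact Measure.integrableOn_of_bounded measure_Ioc_lt_top.ne
    measurable_uc.aestronglyMeasurable (.of_forall fun θ ↦ norm_uc_le β (by simp))

end SymbolU

theorem stmt14_general {μ : ℝ} (hμ : |μ| < 1) {a b : ℂ → ℂ} (ha : CircleIntegrable a 0 1)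
    (hb : CircleIntegrable b 0 1) {ψ1 ψm : ℝ → ℂ}
    (hψ1 : ∀ θ : ℝ, ψ1 θ = a ((exp (I * θ) - μ) / (1 - μ * exp (I * θ))) - 1)
    (hψm : ∀ θ : ℝ, ψm θ = b ((-exp (I * θ) - μ) / (1 + μ * exp (I * θ))) - 1)
    {Hψ1 Hψm Ha Hb : l2 →L[ℂ] l2}
    (hHψ1 : ∀ j k : ℕ, ent Hψ1 j k = fc ψ1 (j + k + 1))
    (hHψm : ∀ j k : ℕ, ent Hψm j k = fc ψm (j + k + 1))
    (hHa : IsHankel Ha a) (hHb : IsHankel Hb b) :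
    UnitarilyEquivalent Hψ1 Ha ∧ UnitarilyEquivalent Hψm (-Hb) := by
  have moebius_one (t : ℂ) : (t - μ) / (1 - μ * t) = moebius (1 : ℝ) μ t := by
    simp [moebius]
  have moebius_neg_one (t : ℂ) : (-t - μ) / (1 + μ * t) = moebius (-1 : ℝ) (-μ : ℝ) t := by
    simp only [moebius, ofReal_neg, ofReal_one, map_neg, conj_ofReal]
    ring
  have hankel_one : IsHankel Hψ1 fun t ↦ a (moebius (1 : ℝ) μ t) - 1 := fun j k ↦ by
    simp only [hHψ1, funext hψ1, moebius_one]
  have hankel_neg_one : IsHankel Hψm fun t ↦ b (moebius (-1 : ℝ) (-μ : ℝ) t) - 1 := fun j k ↦ by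
    simp only [hHψm, funext hψm, moebius_neg_one]
  constructor
  · simpa using hankel_one.unitarilyEquivalent_smul abs_one hμ ha hHa
  · simpa using hankel_neg_one.unitarilyEquivalent_smul (by simp) (by rwa [abs_neg]) hb hHb

end

/-- For `μ ∈ [0,1)`, with `ψ_μ^{(1)}(t) = u_{−1/2,1}((t−μ)/(1−μt)) − 1` and
`ψ_μ^{(−1)}(t) = u_{1/2,1}((−t−μ)/(1+μt)) − 1`, the Hankel operator `H(ψ_μ^{(1)})` is
unitarily equivalent to `H(u_{−1/2,1})`, and `H(ψ_μ^{(−1)})` is unitarily equivalent to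
`−H(u_{1/2,1})`. -/
theorem stmt14 (μ : ℝ) (hμ0 : 0 ≤ μ) (hμ1 : μ < 1)
    (ψ1 ψm : ℝ → ℂ)
    (hψ1 : ∀ θ : ℝ, ψ1 θ =
      uc (-(1/2)) ((Complex.exp (Complex.I * θ) - μ) /
        (1 - μ * Complex.exp (Complex.I * θ))) - 1)
    (hψm : ∀ θ : ℝ, ψm θ =
      uc (1/2) ((-Complex.exp (Complex.I * θ) - μ) /
        (1 + μ * Complex.exp (Complex.I * θ))) - 1)
    (Hψ1 Hψm Hu1 Hu2 : l2 →L[ℂ] l2)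
    (hHψ1 : ∀ j k : ℕ, ent Hψ1 j k = fc ψ1 ((j : ℤ) + k + 1))
    (hHψm : ∀ j k : ℕ, ent Hψm j k = fc ψm ((j : ℤ) + k + 1))
    (hHu1 : ∀ j k : ℕ, ent Hu1 j k =
      fc (fun θ => uc (-(1/2)) (Complex.exp (Complex.I * θ))) ((j : ℤ) + k + 1))
    (hHu2 : ∀ j k : ℕ, ent Hu2 j k =
      fc (fun θ => uc (1/2) (Complex.exp (Complex.I * θ))) ((j : ℤ) + k + 1)) :
    (∃ U : l2 ≃ₗᵢ[ℂ] l2, ∀ x : l2, U (Hψ1 (U.symm x)) = Hu1 x) ∧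
    (∃ U : l2 ≃ₗᵢ[ℂ] l2, ∀ x : l2, U (Hψm (U.symm x)) = -(Hu2 x)) :=
  stmt14_general (abs_lt.2 ⟨by linarith, hμ1⟩) (circleIntegrable_uc _) (circleIntegrable_uc _)
    hψ1 hψm hHψ1 hHψm hHu1 hHu2

end
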